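/- For every τ in the complex upper half plane, E_{2,2}(τ)² − E_{2,4}(τ) = 128·η(2τ)¹⁶/η(τ)⁸ and E_{2,2}(τ)² + E_{2,4}(τ) = 2·η(τ)¹⁶/η(2τ)⁸. -/

import Mathlib

open Complex

/-- `q = exp(2πiτ)`. -/
noncomputable def qq (τ : ℂ) : ℂ := Complex.exp (2 * Real.pi * Complex.I * τ)

/-- `σ_k(n) = Σ_{d ∣ n} d^k`, as a complex number. -/
noncomputable def sigmaC (k n : ℕ) : ℂ := ∑ d ∈ n.divisors, (d : ℂ) ^ k

/-- Eisenstein series `E₂(τ) = 1 - 24 Σ_{n≥1} σ₁(n) qⁿ`. -/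
noncomputable def E₂ (τ : ℂ) : ℂ := 1 - 24 * ∑' n : ℕ, sigmaC 1 (n + 1) * qq τ ^ (n + 1)

/-- Eisenstein series `E₄(τ) = 1 + 240 Σ_{n≥1} σ₃(n) qⁿ`. -/
noncomputable def E₄ (τ : ℂ) : ℂ := 1 + 240 * ∑' n : ℕ, sigmaC 3 (n + 1) * qq τ ^ (n + 1)

/-- Eisenstein series `E₆(τ) = 1 - 504 Σ_{n≥1} σ₅(n) qⁿ`. -/
noncomputable def E₆ (τ : ℂ) : ℂ := 1 - 504 * ∑' n : ℕ, sigmaC 5 (n + 1) * qq τ ^ (n + 1)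

/-- Dedekind eta function `η(τ) = exp(πiτ/12) ∏_{n≥1} (1 - qⁿ)`. -/
noncomputable def η (τ : ℂ) : ℂ :=
  Complex.exp (Real.pi * Complex.I * τ / 12) * ∏' n : ℕ, (1 - qq τ ^ (n + 1))

/-- Theta function `θ(τ) = Σ_{n ∈ ℤ} q^{n²}`. -/
noncomputable def θ (τ : ℂ) : ℂ := ∑' n : ℤ, qq τ ^ (n ^ 2)

/-- The character `χ₋₄`: `χ₋₄(d) = 1, -1, 0` according as `d ≡ 1, 3, 0/2 (mod 4)`. -/
noncomputable def χ₄ (d : ℕ) : ℂ := if d % 4 = 1 then 1 else if d % 4 = 3 then -1 else 0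

/-- The character `χ₋₃`: `χ₋₃(d) = 1, -1, 0` according as `d ≡ 1, 2, 0 (mod 3)`. -/
noncomputable def χ₃ (d : ℕ) : ℂ := if d % 3 = 1 then 1 else if d % 3 = 2 then -1 else 0

/-- `E_{1,-4}(τ) = 1/4 + Σ_{n≥1} (Σ_{d∣n} χ₋₄(d)) qⁿ`. -/
noncomputable def E₁₄ (τ : ℂ) : ℂ :=
  1 / 4 + ∑' n : ℕ, (∑ d ∈ (n + 1).divisors, χ₄ d) * qq τ ^ (n + 1)

/-- `E_{1,-3}(τ) = 1/6 + Σ_{n≥1} (Σ_{d∣n} χ₋₃(d)) qⁿ`. -/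
noncomputable def E₁₃ (τ : ℂ) : ℂ :=
  1 / 6 + ∑' n : ℕ, (∑ d ∈ (n + 1).divisors, χ₃ d) * qq τ ^ (n + 1)

/-- `E_{2,2}(τ) = 2E₂(2τ) - E₂(τ)`. -/
noncomputable def E₂₂ (τ : ℂ) : ℂ := 2 * E₂ (2 * τ) - E₂ τ

/-- `E_{2,4}(τ) = (4E₄(2τ) - E₄(τ))/3`. -/
noncomputable def E₂₄ (τ : ℂ) : ℂ := (4 * E₄ (2 * τ) - E₄ τ) / 3

/-- `E_{3,2}(τ) = (3E₂(3τ) - E₂(τ))/2`. -/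
noncomputable def E₃₂ (τ : ℂ) : ℂ := (3 * E₂ (3 * τ) - E₂ τ) / 2

/-- `E_{3,4}(τ) = (9E₄(3τ) - E₄(τ))/8`. -/
noncomputable def E₃₄ (τ : ℂ) : ℂ := (9 * E₄ (3 * τ) - E₄ τ) / 8

/-- `E_{4,2}(τ) = (4E₂(4τ) - E₂(τ))/3`. -/
noncomputable def E₄₂ (τ : ℂ) : ℂ := (4 * E₂ (4 * τ) - E₂ τ) / 3

/-- `E'_{4,2}(τ) = 4E₂(4τ) - 4E₂(2τ) + E₂(τ)`. -/
noncomputable def E₄₂' (τ : ℂ) : ℂ := 4 * E₂ (4 * τ) - 4 * E₂ (2 * τ) + E₂ τ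

/-- `f_{1,j}(τ) = 2E₂(τ) - ((3+(-1)ʲi√3)/6)E₂(τ/2) - ((3-(-1)ʲi√3)/6)E₂((τ+1)/2)`. -/
noncomputable def f₁ (j : ℕ) (τ : ℂ) : ℂ :=
  2 * E₂ τ - ((3 + (-1 : ℂ) ^ j * Complex.I * Real.sqrt 3) / 6) * E₂ (τ / 2)
    - ((3 - (-1 : ℂ) ^ j * Complex.I * Real.sqrt 3) / 6) * E₂ ((τ + 1) / 2)

/-- `g_{1,j}(τ) = (3/2)E₂(τ) - (1/4) Σ_{0≤m≤2, m≢j (mod 3)} E₂((τ+m)/3)`. -/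
noncomputable def g₁ (j : ℕ) (τ : ℂ) : ℂ :=
  (3 / 2) * E₂ τ -
    (1 / 4) * ∑ m ∈ (Finset.range 3).filter (fun m => ¬ m % 3 = j % 3), E₂ ((τ + m) / 3)

/-- `f_{2,j}(τ) = 4E_{1,-4}(τ) + (-1)ʲ·2i·(E_{1,-4}(τ/2) - E_{1,-4}((τ+1)/2))`. -/
noncomputable def f₂ (j : ℕ) (τ : ℂ) : ℂ :=
  4 * E₁₄ τ + (-1 : ℂ) ^ j * 2 * Complex.I * (E₁₄ (τ / 2) - E₁₄ ((τ + 1) / 2))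

/-- `f_{3,j}(τ) = 6E_{1,-3}(2τ) + (-1)ʲ·i√3·(E_{1,-3}(τ/2) - E_{1,-3}((τ+1)/2))`. -/
noncomputable def f₃ (j : ℕ) (τ : ℂ) : ℂ :=
  6 * E₁₃ (2 * τ) +
    (-1 : ℂ) ^ j * Complex.I * Real.sqrt 3 * (E₁₃ (τ / 2) - E₁₃ ((τ + 1) / 2))

/-- `f_{4,j}(τ) = θ(τ/2 - (-1)ʲ/4)`. -/
noncomputable def f₄ (j : ℕ) (τ : ℂ) : ℂ := θ (τ / 2 - (-1 : ℂ) ^ j / 4)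

/-- `g_{4,j}(τ) = 2θ(2τ)² - θ((τ+j)/2)²`. -/
noncomputable def g₄ (j : ℕ) (τ : ℂ) : ℂ := 2 * θ (2 * τ) ^ 2 - θ ((τ + j) / 2) ^ 2

/-- `E_{3,-3,1}(τ) = -1/9 + Σ_{n≥1} (Σ_{d∣n} d²χ₋₃(d)) qⁿ`. -/
noncomputable def E₃₃₁ (τ : ℂ) : ℂ :=
  -(1 / 9) + ∑' n : ℕ, (∑ d ∈ (n + 1).divisors, (d : ℂ) ^ 2 * χ₃ d) * qq τ ^ (n + 1)

/-- `E_{3,1,-3}(τ) = Σ_{n≥1} (Σ_{d∣n} d²χ₋₃(n/d)) qⁿ`. -/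
noncomputable def E₃₁₃ (τ : ℂ) : ℂ :=
  ∑' n : ℕ, (∑ d ∈ (n + 1).divisors, (d : ℂ) ^ 2 * χ₃ ((n + 1) / d)) * qq τ ^ (n + 1)

/-!
Since `η` has no zeros on the upper half plane, `(E_{2,2}² - E_{2,4}) η(τ)⁸ / η(2τ)¹⁶` is a
holomorphic modular function of weight zero for `Γ₀(2)`. It is bounded at the cusp `0` and takes the
value `128` at the cusp `∞`, because `E_{2,2} = 1 + 24q + ⋯` and `E_{2,4} = 1 - 80q + ⋯`; so it is
constant, which is the first identity. The Fricke involution `τ ↦ -1 / (2τ)` multiplies `E_{2,2}` by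
`-2τ²` and `E_{2,4}` by `-4τ⁴`, so it flips the relative sign of `E_{2,2}²` and `E_{2,4}`, and it
exchanges `η(τ)` with `η(2τ)`: it turns the first identity into the second.
-/

open UpperHalfPlane hiding I
open Filter Topology ModularGroup CongruenceSubgroup
open scoped MatrixGroups Manifold

-- Schreier argument: `H * R` contains `1` and is stable under right multiplication by `A ∪ A⁻¹`.
theorem exists_mem_mul_mem_eq_of_closure_eq_top {G : Type*} [Group G] {A R : Set G}
    {H : Subgroup G} (hA : Subgroup.closure A = ⊤) (h_one : 1 ∈ R)
    (h_mul : ∀ r ∈ R, ∀ a ∈ A, ∃ h ∈ H, ∃ r' ∈ R, h * r' = r * a)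
    (h_mul_inv : ∀ r ∈ R, ∀ a ∈ A, ∃ h ∈ H, ∃ r' ∈ R, h * r' = r * a⁻¹) (g : G) :
    ∃ h ∈ H, ∃ r ∈ R, h * r = g := by
  have step {x a : G} (hx : ∃ h ∈ H, ∃ r ∈ R, h * r = x)
      (ha : ∀ r ∈ R, ∃ h ∈ H, ∃ r' ∈ R, h * r' = r * a) : ∃ h ∈ H, ∃ r ∈ R, h * r = x * a := by
    obtain ⟨h, hh, r, hr, rfl⟩ := hx
    obtain ⟨h', hh', r', hr', e⟩ := ha r hr
    exact ⟨h * h', mul_mem hh hh', r', hr', by rw [mul_assoc, e, mul_assoc]⟩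
  have hg : g ∈ Subgroup.closure A := hA ▸ Subgroup.mem_top g
  induction hg using Subgroup.closure_induction_right with
  | one => exact ⟨1, one_mem H, 1, h_one, one_mul 1⟩
  | mul_right _ _ a ha ih => exact step ih fun r hr ↦ h_mul r hr a ha
  | mul_inv_cancel _ _ a ha ih => exact step ih fun r hr ↦ h_mul_inv r hr a ha

theorem exists_mem_closure_mul_cosetRep_eq (γ : SL(2, ℤ)) :
    ∃ h ∈ Subgroup.closure {-1, T, S * T ^ 2 * S⁻¹},
      ∃ r ∈ ({1, S, S * T} : Set SL(2, ℤ)), h * r = γ := by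
  set U := S * T ^ 2 * S⁻¹
  set R : Set SL(2, ℤ) := {1, S, S * T}
  set H := Subgroup.closure ({-1, T, U} : Set SL(2, ℤ))
  have hneg : -1 ∈ H := Subgroup.subset_closure (by simp)
  have hT : T ∈ H := Subgroup.subset_closure (by simp)
  have hU : U ∈ H := Subgroup.subset_closure (by simp)
  have h1R : 1 ∈ R := by simp [R]
  have hSR : S ∈ R := by simp [R]
  have hSTR : S * T ∈ R := by simp [R]
  have mul_S : ∀ r ∈ R, ∃ h ∈ H, ∃ r' ∈ R, h * r' = r * S := by
    rintro _ (rfl | rfl | rfl)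
    exacts [⟨1, one_mem H, S, hSR, by decide⟩, ⟨-1, hneg, 1, h1R, by decide⟩,
      ⟨T⁻¹ * U⁻¹, mul_mem (inv_mem hT) (inv_mem hU), S * T, hSTR, by decide⟩]
  have mul_T : ∀ r ∈ R, ∃ h ∈ H, ∃ r' ∈ R, h * r' = r * T := by
    rintro _ (rfl | rfl | rfl)
    exacts [⟨T, hT, 1, h1R, by decide⟩, ⟨1, one_mem H, S * T, hSTR, by decide⟩,
      ⟨U, hU, S, hSR, by decide⟩]
  have mul_T_inv : ∀ r ∈ R, ∃ h ∈ H, ∃ r' ∈ R, h * r' = r * T⁻¹ := by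
    rintro _ (rfl | rfl | rfl)
    exacts [⟨T⁻¹, inv_mem hT, 1, h1R, by decide⟩, ⟨U⁻¹, inv_mem hU, S * T, hSTR, by decide⟩,
      ⟨1, one_mem H, S, hSR, by decide⟩]
  have mul_S_inv : ∀ r ∈ R, ∃ h ∈ H, ∃ r' ∈ R, h * r' = r * S⁻¹ := by
    intro r hr
    obtain ⟨h, hh, r', hr', e⟩ := mul_S r hr
    refine ⟨-1 * h, mul_mem hneg hh, r', hr', ?_⟩
    rw [mul_assoc, e, show S⁻¹ = -S by decide, neg_one_mul, mul_neg]
  refine exists_mem_mul_mem_eq_of_closure_eq_top SpecialLinearGroup.SL2Z_generators h1R ?_ ?_ γ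
  · rintro r hr a (rfl | rfl)
    exacts [mul_S r hr, mul_T r hr]
  · rintro r hr a (rfl | rfl)
    exacts [mul_S_inv r hr, mul_T_inv r hr]

theorem closure_eq_Gamma0_two : Subgroup.closure {-1, T, S * T ^ 2 * S⁻¹} = Gamma0 2 := by
  have hle : Subgroup.closure {-1, T, S * T ^ 2 * S⁻¹} ≤ Gamma0 2 := by
    rw [Subgroup.closure_le]
    rintro _ (rfl | rfl | rfl) <;> simp only [SetLike.mem_coe, Gamma0_mem] <;> decide
  refine le_antisymm hle fun γ hγ ↦ ?_
  obtain ⟨h, hh, r, hr, rfl⟩ := exists_mem_closure_mul_cosetRep_eq γ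
  have hr_mem : r ∈ Gamma0 2 := (Subgroup.mul_mem_cancel_left _ (hle hh)).mp hγ
  obtain rfl : r = 1 := by
    rw [Gamma0_mem] at hr_mem
    rcases hr with rfl | rfl | rfl
    exacts [rfl, absurd hr_mem (by decide), absurd hr_mem (by decide)]
  simpa using hh

/-- The Fricke involution `τ ↦ -1 / (2τ)` of level two, which normalizes `Γ₀(2)` and exchanges its
two cusps. -/
noncomputable def fricke (τ : ℂ) : ℂ := -1 / (2 * τ)

theorem im_neg_one_div_pos {τ : ℂ} (hτ : 0 < τ.im) : 0 < (-1 / τ).im := by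
  simpa [neg_div] using UpperHalfPlane.im_inv_neg_coe_pos ⟨τ, hτ⟩

theorem im_two_mul_pos {τ : ℂ} (hτ : 0 < τ.im) : 0 < (2 * τ).im := by
  simpa using hτ

theorem im_fricke_pos {τ : ℂ} (hτ : 0 < τ.im) : 0 < (fricke τ).im :=
  im_neg_one_div_pos (im_two_mul_pos hτ)

theorem two_mul_fricke (τ : ℂ) : 2 * fricke τ = -1 / τ := by
  rw [fricke, ← mul_div_assoc, mul_div_mul_left _ _ two_ne_zero]

theorem neg_one_div_eq_fricke (τ : ℂ) : -1 / τ = fricke (τ / 2) := by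
  rw [fricke, mul_div_cancel₀ τ two_ne_zero]

theorem tendsto_mul_left_comap_im_atTop {c : ℝ} (hc : 0 < c) :
    Tendsto (fun τ : ℂ ↦ c * τ) (comap Complex.im atTop) (comap Complex.im atTop) := by
  rw [tendsto_comap_iff]
  simpa [Function.comp_def] using tendsto_comap.const_mul_atTop hc

theorem mdifferentiable_comp_coe_iff {f : ℂ → ℂ} :
    MDiff (fun z : ℍ ↦ f z) ↔ DifferentiableOn ℂ f upperHalfPlaneSet := by
  rw [UpperHalfPlane.mdifferentiable_iff]
  refine differentiableOn_congr fun z hz ↦ ?_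
  rw [Function.comp_apply, ofComplex_apply_of_im_pos hz]

section SlashAction

open scoped ModularForm

theorem slash_eq_self_of_mem_closure {β G α : Type*} [Group G] [AddMonoid α] [SlashAction β G α]
    {k : β} {f : α} {A : Set G} (hA : ∀ a ∈ A, f ∣[k] a = f) {g : G}
    (hg : g ∈ Subgroup.closure A) : f ∣[k] g = f := by
  induction hg using Subgroup.closure_induction with
  | mem a ha => exact hA a ha
  | one => exact SlashAction.slash_one k f
  | mul a b _ _ ha hb => rw [SlashAction.slash_mul, ha, hb]
  | inv a _ ha =>
    conv_lhs => rw [← ha, ← SlashAction.slash_mul, mul_inv_cancel, SlashAction.slash_one]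

theorem slash_eq_self_of_mem_Gamma0_two {k : ℤ} (hk : Even k) {f : ℍ → ℂ}
    (hT : f ∣[k] T = f) (hS : (f ∣[k] S) ∣[k] (T ^ 2) = f ∣[k] S) {γ : SL(2, ℤ)}
    (hγ : γ ∈ Gamma0 2) : f ∣[k] γ = f := by
  rw [← closure_eq_Gamma0_two] at hγ
  refine slash_eq_self_of_mem_closure ?_ hγ
  rintro _ (rfl | rfl | rfl)
  · ext z
    simp [ModularForm.SL_slash_apply, denom, hk.neg_one_zpow]
  · exact hT
  · rw [SlashAction.slash_mul, SlashAction.slash_mul, hS, ← SlashAction.slash_mul,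
      mul_inv_cancel, SlashAction.slash_one]

theorem isBoundedAtImInfty_slash_of_Gamma0_two {k : ℤ} {f : ℍ → ℂ}
    (hf : ∀ γ ∈ Gamma0 2, f ∣[k] γ = f) (h_infty : IsBoundedAtImInfty f)
    (h_zero : IsBoundedAtImInfty (f ∣[k] S)) (γ : SL(2, ℤ)) : IsBoundedAtImInfty (f ∣[k] γ) := by
  obtain ⟨h, hh, r, hr, rfl⟩ := exists_mem_closure_mul_cosetRep_eq γ
  rw [closure_eq_Gamma0_two] at hh
  rw [SlashAction.slash_mul, hf h hh]
  rcases hr with rfl | rfl | rfl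
  · rwa [SlashAction.slash_one]
  · exact h_zero
  · rw [SlashAction.slash_mul, ModularForm.SL_slash]
    exact h_zero.slash k (by simp [coe_T])

/-- The modular form of level `Γ₀(2)` and even weight given by a holomorphic function `f` on `ℍ`
that is invariant under the generators `T` and `S T² S⁻¹` and bounded at the two cusps `∞`, `0`. -/
noncomputable def modularFormGamma0Two {k : ℤ} (hk : Even k) (f : ℍ → ℂ) (hf : MDiff f)
    (hT : f ∣[k] T = f) (hS : (f ∣[k] S) ∣[k] (T ^ 2) = f ∣[k] S)
    (h_infty : IsBoundedAtImInfty f) (h_zero : IsBoundedAtImInfty (f ∣[k] S)) :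
    ModularForm (Gamma0 2) k where
  toFun := f
  slash_action_eq' := by
    rintro _ ⟨γ, hγ, rfl⟩
    exact slash_eq_self_of_mem_Gamma0_two hk hT hS hγ
  holo' := hf
  bdd_at_cusps' hc := by
    rw [Subgroup.IsArithmetic.isCusp_iff_isCusp_SL2Z] at hc
    rw [OnePoint.isBoundedAt_iff_forall_SL2Z hc]
    intro γ _
    exact isBoundedAtImInfty_slash_of_Gamma0_two
      (fun _ ↦ slash_eq_self_of_mem_Gamma0_two hk hT hS) h_infty h_zero γ

theorem slash_zero_apply (f : ℍ → ℂ) (γ : SL(2, ℤ)) (z : ℍ) :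
    (f ∣[(0 : ℤ)] γ) z = f (γ • z) := by
  rw [ModularForm.SL_slash_apply, neg_zero, zpow_zero, mul_one]

theorem eq_of_tendsto_of_fricke_periodic {f : ℂ → ℂ} {c : ℂ}
    (hf : DifferentiableOn ℂ f upperHalfPlaneSet)
    (h_per : ∀ τ : ℂ, 0 < τ.im → f (τ + 1) = f τ)
    (h_per' : ∀ τ : ℂ, 0 < τ.im → f (fricke (τ + 1)) = f (fricke τ))
    (h_infty : Tendsto f (comap Complex.im atTop) (𝓝 c))
    (h_zero : (fun τ ↦ f (fricke τ)) =O[comap Complex.im atTop] (1 : ℂ → ℝ))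
    {τ : ℂ} (hτ : 0 < τ.im) : f τ = c := by
  set g : ℍ → ℂ := fun z ↦ f z
  have hgS (z : ℍ) : (g ∣[(0 : ℤ)] S) z = f (fricke (2⁻¹ * z)) := by
    rw [slash_zero_apply, UpperHalfPlane.modular_S_smul, inv_mul_eq_div, ← neg_one_div_eq_fricke]
    simp [g, neg_div]
  have hT : g ∣[(0 : ℤ)] T = g := by
    ext z
    rw [slash_zero_apply, UpperHalfPlane.modular_T_smul]
    simpa [g, add_comm] using h_per z z.im_pos
  have hT' : (g ∣[(0 : ℤ)] S) ∣[(0 : ℤ)] (T ^ 2) = g ∣[(0 : ℤ)] S := by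
    ext z
    have h_smul : (↑(T ^ 2 • z) : ℂ) = z + 2 := mod_cast coe_T_zpow_smul_eq z (n := 2)
    rw [slash_zero_apply, hgS, hgS, h_smul, mul_add, inv_mul_cancel₀ two_ne_zero]
    exact h_per' _ (by simpa using z.im_pos)
  have hg_infty : Tendsto g atImInfty (𝓝 c) := h_infty.comp tendsto_coe_atImInfty
  have hg_zero : IsBoundedAtImInfty (g ∣[(0 : ℤ)] S) := by
    have h_half : Tendsto (fun z : ℍ ↦ (2⁻¹ : ℂ) * z) atImInfty (comap Complex.im atTop) := by
      simpa using! (tendsto_mul_left_comap_im_atTop (c := 2⁻¹) (by norm_num)).comp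
        tendsto_coe_atImInfty
    exact (h_zero.comp_tendsto h_half).congr_left fun z ↦ (hgS z).symm
  obtain ⟨c', hc'⟩ := ModularForm.eq_const_of_weight_zero
    (modularFormGamma0Two Even.zero g (mdifferentiable_comp_coe_iff.mpr hf) hT hT'
      (hg_infty.isBigO_one ℝ) hg_zero)
  have hg_const : g = Function.const ℍ c' := hc'
  have h_eq : c' = c := tendsto_nhds_unique (hg_const ▸ tendsto_const_nhds) hg_infty
  exact (congrFun hg_const ⟨τ, hτ⟩).trans h_eq

end SlashAction

theorem sigmaC_eq_sigma (k n : ℕ) : sigmaC k n = (ArithmeticFunction.sigma k n : ℂ) := by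
  simp [sigmaC, ArithmeticFunction.sigma_apply]

theorem norm_sigmaC_le (k n : ℕ) : ‖sigmaC k n‖ ≤ (n : ℝ) ^ (k + 1) := by
  rw [sigmaC_eq_sigma, Complex.norm_natCast]
  exact_mod_cast ArithmeticFunction.sigma_le_pow_succ k n

theorem tsum_pnat_sigma_mul_cexp_pow (k : ℕ) (τ : ℂ) :
    ∑' n : ℕ+, (ArithmeticFunction.sigma k n : ℂ) * Complex.exp (2 * Real.pi * I * τ) ^ (n : ℕ) =
      ∑' n : ℕ, sigmaC k (n + 1) * qq τ ^ (n + 1) := by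
  rw [tsum_pnat_eq_tsum_succ (f := fun n : ℕ ↦
    (ArithmeticFunction.sigma k n : ℂ) * Complex.exp (2 * Real.pi * I * τ) ^ n)]
  simp [sigmaC_eq_sigma, qq]

theorem E₂_coe (z : ℍ) : E₂ z = EisensteinSeries.E2 z := by
  rw [EisensteinSeries.E2_eq_tsum_cexp, tsum_pnat_sigma_mul_cexp_pow, E₂]

theorem E₄_coe (z : ℍ) : E₄ z = ModularForm.E₄ z := by
  have hb : bernoulli 4 = -1 / 30 := by
    rw [bernoulli_eq_bernoulli'_of_ne_one (by norm_num), bernoulli'_four]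
  rw [EisensteinSeries.q_expansion_bernoulli (k := 4) (by norm_num) (by decide) z, E₄,
    ← tsum_pnat_sigma_mul_cexp_pow]
  simp only [hb, zpow_natCast]
  norm_num

theorem η_eq_eta (τ : ℂ) : η τ = ModularForm.eta τ := by
  simp only [η, ModularForm.eta, ModularForm.eta_q_eq_pow, qq, Function.Periodic.qParam]
  congr 2
  push_cast
  ring

theorem η_ne_zero {τ : ℂ} (hτ : 0 < τ.im) : η τ ≠ 0 :=
  η_eq_eta τ ▸ ModularForm.eta_ne_zero hτ

theorem differentiableOn_E₂ : DifferentiableOn ℂ E₂ upperHalfPlaneSet :=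
  mdifferentiable_comp_coe_iff.mp (by simpa only [E₂_coe] using E2_mdifferentiable)

theorem differentiableOn_E₄ : DifferentiableOn ℂ E₄ upperHalfPlaneSet :=
  mdifferentiable_comp_coe_iff.mp <| by
    simpa only [E₄_coe] using ModularFormClass.holo ModularForm.E₄

theorem differentiableOn_η : DifferentiableOn ℂ η upperHalfPlaneSet := fun τ hτ ↦ by
  rw [show η = ModularForm.eta from funext η_eq_eta]
  exact (ModularForm.differentiableAt_eta_of_mem_upperHalfPlaneSet hτ).differentiableWithinAt

theorem differentiableOn_comp_two_mul {f : ℂ → ℂ} (hf : DifferentiableOn ℂ f upperHalfPlaneSet) :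
    DifferentiableOn ℂ (fun τ ↦ f (2 * τ)) upperHalfPlaneSet :=
  hf.comp (by fun_prop) fun _ ↦ im_two_mul_pos

theorem E₂_neg_one_div {τ : ℂ} (hτ : 0 < τ.im) :
    E₂ (-1 / τ) = τ ^ 2 * E₂ τ + 6 / (Real.pi * I) * τ := by
  have hτ0 : τ ≠ 0 := fun h ↦ by simp [h] at hτ
  have hpi : (Real.pi : ℂ) ≠ 0 := ofReal_ne_zero.mpr Real.pi_ne_zero
  have h := congrFun (EisensteinSeries.E2_slash_action S) ⟨τ, hτ⟩
  rw [ModularForm.SL_slash_apply, UpperHalfPlane.modular_S_smul, denom_S, Pi.sub_apply,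
    Pi.smul_apply, EisensteinSeries.D2_S, ← E₂_coe, ← E₂_coe, riemannZeta_two, zpow_neg,
    mul_inv_eq_iff_eq_mul₀ (by simpa using hτ0), smul_eq_mul] at h
  have hI : 6 / (Real.pi * I) = -(6 * I / Real.pi) := by
    rw [div_mul_eq_div_div, div_I]
    ring
  rw [show -1 / τ = (-τ)⁻¹ by field_simp, h, hI]
  field_simp
  ring

open scoped ModularForm in
theorem E₄_neg_one_div {τ : ℂ} (hτ : 0 < τ.im) : E₄ (-1 / τ) = τ ^ 4 * E₄ τ := by
  have hτ0 : τ ≠ 0 := fun h ↦ by simp [h] at hτ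
  have h : (⇑ModularForm.E₄ ∣[(4 : ℤ)] S) ⟨τ, hτ⟩ = ModularForm.E₄ ⟨τ, hτ⟩ :=
    congrFun (ModularForm.E₄.slash_action_eq' _ ⟨S, rfl⟩) ⟨τ, hτ⟩
  rw [ModularForm.SL_slash_apply, UpperHalfPlane.modular_S_smul, denom_S, ← E₄_coe, ← E₄_coe,
    zpow_neg, mul_inv_eq_iff_eq_mul₀ (by simpa using hτ0)] at h
  rw [show -1 / τ = (-τ)⁻¹ by field_simp, mul_comm]
  exact_mod_cast h

theorem sqrt_pow_eight {z : ℂ} (hz : z ≠ 0) : Complex.sqrt z ^ 8 = z ^ 4 := by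
  rw [sqrt_eq_exp hz, ← Complex.exp_nat_mul,
    show ((8 : ℕ) : ℂ) * (log z / 2) = (4 : ℕ) * log z by push_cast; ring, Complex.exp_nat_mul,
    Complex.exp_log hz]

theorem η_neg_one_div_pow_eight {τ : ℂ} (hτ : 0 < τ.im) : η (-1 / τ) ^ 8 = τ ^ 4 * η τ ^ 8 := by
  have hτ0 : τ ≠ 0 := fun h ↦ by simp [h] at hτ
  have h : ModularForm.eta (-1 / τ) =
      (Complex.sqrt I)⁻¹ * (Complex.sqrt τ * ModularForm.eta τ) := by
    simpa using ModularForm.eta_comp_eq_csqrt_I_inv (show τ ∈ upperHalfPlaneSet from hτ)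
  rw [η_eq_eta, η_eq_eta, h, mul_pow, mul_pow, inv_pow, sqrt_pow_eight I_ne_zero,
    sqrt_pow_eight hτ0, I_pow_four, inv_one, one_mul]

theorem E₂₂_fricke {τ : ℂ} (hτ : 0 < τ.im) : E₂₂ (fricke τ) = -2 * τ ^ 2 * E₂₂ τ := by
  rw [E₂₂, E₂₂, two_mul_fricke, fricke, E₂_neg_one_div hτ, E₂_neg_one_div (im_two_mul_pos hτ)]
  ring

theorem E₂₄_fricke {τ : ℂ} (hτ : 0 < τ.im) : E₂₄ (fricke τ) = -4 * τ ^ 4 * E₂₄ τ := by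
  rw [E₂₄, E₂₄, two_mul_fricke, fricke, E₄_neg_one_div hτ, E₄_neg_one_div (im_two_mul_pos hτ)]
  ring

theorem η_fricke_pow_eight {τ : ℂ} (hτ : 0 < τ.im) :
    η (fricke τ) ^ 8 = 16 * τ ^ 4 * η (2 * τ) ^ 8 := by
  rw [fricke, η_neg_one_div_pow_eight (im_two_mul_pos hτ)]
  ring

theorem η_two_mul_fricke_pow_sixteen {τ : ℂ} (hτ : 0 < τ.im) :
    η (2 * fricke τ) ^ 16 = τ ^ 8 * η τ ^ 16 := by
  rw [two_mul_fricke, pow_mul _ 8 2, η_neg_one_div_pow_eight hτ]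
  ring

theorem qq_ne_zero (τ : ℂ) : qq τ ≠ 0 := Complex.exp_ne_zero _

theorem qq_two_mul (τ : ℂ) : qq (2 * τ) = qq τ ^ 2 := by
  rw [qq, qq, ← Complex.exp_nat_mul]
  congr 1
  push_cast
  ring

theorem qq_add_one (τ : ℂ) : qq (τ + 1) = qq τ := by
  rw [qq, qq, mul_add, mul_one, Complex.exp_add, Complex.exp_two_pi_mul_I, mul_one]

theorem tendsto_qq : Tendsto qq (comap Complex.im atTop) (𝓝 0) := by
  refine ((Function.Periodic.qParam_tendsto one_pos).mono_right nhdsWithin_le_nhds).congr fun τ ↦ ?_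
  simp [Function.Periodic.qParam, qq]

theorem tendsto_tsum_mul_pow_nhds_zero {a : ℕ → ℂ} {r : ℝ} (hr : 0 < r)
    (ha : Summable fun n ↦ ‖a n‖ * r ^ n) :
    Tendsto (fun q ↦ ∑' n, a n * q ^ n) (𝓝 0) (𝓝 (a 0)) := by
  have h_sum : ∑' n, a n * (0 : ℂ) ^ n = a 0 := by
    rw [tsum_eq_single 0 fun n hn ↦ by simp [hn], pow_zero, mul_one]
  rw [← h_sum]
  refine tendsto_tsum_of_dominated_convergence ha
    (fun n ↦ (Continuous.tendsto (by fun_prop) 0)) ?_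
  filter_upwards [Metric.ball_mem_nhds 0 hr] with q hq n
  rw [norm_mul, norm_pow]
  have := (mem_ball_zero_iff.mp hq).le
  gcongr

theorem tendsto_tsum_sigmaC_div (k : ℕ) :
    Tendsto (fun τ ↦ (∑' n : ℕ, sigmaC k (n + 1) * qq τ ^ (n + 1)) / qq τ)
      (comap Complex.im atTop) (𝓝 1) := by
  have h_summable : Summable fun n : ℕ ↦ ‖sigmaC k (n + 1)‖ * (2⁻¹ : ℝ) ^ n := by
    have h := (summable_nat_add_iff 1).mpr
      (summable_pow_mul_geometric_of_norm_lt_one (k + 1) (r := (2⁻¹ : ℝ)) (by norm_num))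
    refine .of_nonneg_of_le (fun n ↦ by positivity) (fun n ↦ ?_) (h.mul_left 2)
    calc ‖sigmaC k (n + 1)‖ * (2⁻¹ : ℝ) ^ n
        ≤ ((n + 1 : ℕ) : ℝ) ^ (k + 1) * 2⁻¹ ^ n := by gcongr; exact norm_sigmaC_le k (n + 1)
      _ = 2 * (((n + 1 : ℕ) : ℝ) ^ (k + 1) * 2⁻¹ ^ (n + 1)) := by ring
  have h := (tendsto_tsum_mul_pow_nhds_zero (by norm_num) h_summable).comp tendsto_qq
  rw [show sigmaC k (0 + 1) = 1 by simp [sigmaC]] at h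
  refine h.congr fun τ ↦ ?_
  rw [Function.comp_apply, eq_div_iff (qq_ne_zero τ), ← tsum_mul_right]
  exact tsum_congr fun n ↦ by ring

theorem tendsto_E₂_sub_one_div :
    Tendsto (fun τ ↦ (E₂ τ - 1) / qq τ) (comap Complex.im atTop) (𝓝 (-24)) := by
  have h := (tendsto_tsum_sigmaC_div 1).const_mul (-24)
  rw [mul_one] at h
  exact h.congr fun τ ↦ by rw [E₂]; ring

theorem tendsto_E₄_sub_one_div :
    Tendsto (fun τ ↦ (E₄ τ - 1) / qq τ) (comap Complex.im atTop) (𝓝 240) := by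
  have h := (tendsto_tsum_sigmaC_div 3).const_mul 240
  rw [mul_one] at h
  exact h.congr fun τ ↦ by rw [E₄]; ring

theorem tendsto_of_tendsto_sub_div_qq {f : ℂ → ℂ} {a b : ℂ}
    (h : Tendsto (fun τ ↦ (f τ - b) / qq τ) (comap Complex.im atTop) (𝓝 a)) :
    Tendsto f (comap Complex.im atTop) (𝓝 b) := by
  have h' := (h.mul tendsto_qq).add_const b
  rw [mul_zero, zero_add] at h'
  exact h'.congr fun τ ↦ by rw [div_mul_cancel₀ _ (qq_ne_zero τ), sub_add_cancel]

theorem tendsto_two_mul_sub_div_qq {f : ℂ → ℂ} {a b : ℂ}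
    (h : Tendsto (fun τ ↦ (f τ - b) / qq τ) (comap Complex.im atTop) (𝓝 a)) :
    Tendsto (fun τ ↦ (f (2 * τ) - b) / qq τ) (comap Complex.im atTop) (𝓝 0) := by
  have h_two := tendsto_mul_left_comap_im_atTop two_pos
  have h' := (h.comp h_two).mul tendsto_qq
  rw [mul_zero] at h'
  refine h'.congr fun τ ↦ ?_
  have := qq_ne_zero τ
  simp only [Function.comp_apply, ofReal_ofNat, qq_two_mul]
  field_simp

theorem tendsto_E₂₂_sub_one_div :
    Tendsto (fun τ ↦ (E₂₂ τ - 1) / qq τ) (comap Complex.im atTop) (𝓝 24) := by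
  have h := ((tendsto_two_mul_sub_div_qq tendsto_E₂_sub_one_div).const_mul 2).sub
    tendsto_E₂_sub_one_div
  rw [mul_zero, zero_sub, neg_neg] at h
  exact h.congr fun τ ↦ by rw [E₂₂]; ring

theorem tendsto_E₂₄_sub_one_div :
    Tendsto (fun τ ↦ (E₂₄ τ - 1) / qq τ) (comap Complex.im atTop) (𝓝 (-80)) := by
  have h := (((tendsto_two_mul_sub_div_qq tendsto_E₄_sub_one_div).const_mul 4).sub
    tendsto_E₄_sub_one_div).div_const 3
  rw [show ((4 * 0 - 240) / 3 : ℂ) = -80 by norm_num] at h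
  exact h.congr fun τ ↦ by rw [E₂₄]; ring

theorem tendsto_E₂₂_sq_sub_E₂₄_div :
    Tendsto (fun τ ↦ (E₂₂ τ ^ 2 - E₂₄ τ) / qq τ) (comap Complex.im atTop) (𝓝 128) := by
  have h := (tendsto_E₂₂_sub_one_div.mul
    ((tendsto_of_tendsto_sub_div_qq tendsto_E₂₂_sub_one_div).add_const 1)).sub
    tendsto_E₂₄_sub_one_div
  rw [show (24 * (1 + 1) - -80 : ℂ) = 128 by norm_num] at h
  exact h.congr fun τ ↦ by ring

theorem E₂₂_add_one (τ : ℂ) : E₂₂ (τ + 1) = E₂₂ τ := by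
  simp only [E₂₂, E₂, qq_two_mul, qq_add_one]

theorem E₂₄_add_one (τ : ℂ) : E₂₄ (τ + 1) = E₂₄ τ := by
  simp only [E₂₄, E₄, qq_two_mul, qq_add_one]

/-- The Euler product `∏ (1 - qⁿ)` over `n ≥ 1`. -/
noncomputable def eulerProduct (q : ℂ) : ℂ := ∏' n : ℕ, (1 - q ^ (n + 1))

theorem tendsto_eulerProduct : Tendsto eulerProduct (𝓝 0) (𝓝 1) := by
  have h : ContinuousAt eulerProduct 0 :=
    (ModularForm.differentiableOn_tprod_one_sub_pow.differentiableAt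
      (Metric.ball_mem_nhds 0 one_pos)).continuousAt
  simpa [ContinuousAt, eulerProduct] using h

theorem tendsto_eulerProduct_qq :
    Tendsto (fun τ ↦ eulerProduct (qq τ)) (comap Complex.im atTop) (𝓝 1) :=
  tendsto_eulerProduct.comp tendsto_qq

theorem tendsto_eulerProduct_qq_sq :
    Tendsto (fun τ ↦ eulerProduct (qq τ ^ 2)) (comap Complex.im atTop) (𝓝 1) := by
  refine tendsto_eulerProduct.comp ?_
  simpa using tendsto_qq.pow 2

theorem η_eq_exp_mul (τ : ℂ) :
    η τ = Complex.exp (Real.pi * I * τ / 12) * eulerProduct (qq τ) := rfl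

theorem η_two_mul (τ : ℂ) :
    η (2 * τ) = Complex.exp (Real.pi * I * τ / 12) ^ 2 * eulerProduct (qq τ ^ 2) := by
  rw [η_eq_exp_mul, qq_two_mul, ← Complex.exp_nat_mul]
  congr 2
  push_cast
  ring

theorem exp_pow_twentyfour (τ : ℂ) : Complex.exp (Real.pi * I * τ / 12) ^ 24 = qq τ := by
  rw [qq, ← Complex.exp_nat_mul]
  congr 1
  push_cast
  ring

/-- The quotient `(E_{2,2}² - E_{2,4}) · η(τ)⁸ / η(2τ)¹⁶`, a modular function for `Γ₀(2)` of weight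
zero. -/
noncomputable def levelTwoQuotient (τ : ℂ) : ℂ :=
  (E₂₂ τ ^ 2 - E₂₄ τ) * η τ ^ 8 / η (2 * τ) ^ 16

theorem differentiableOn_levelTwoQuotient :
    DifferentiableOn ℂ levelTwoQuotient upperHalfPlaneSet := by
  have h₂ := differentiableOn_E₂
  have h₂' := differentiableOn_comp_two_mul h₂
  have h₄ := differentiableOn_E₄
  have h₄' := differentiableOn_comp_two_mul h₄
  have hη := differentiableOn_η
  have hη' := differentiableOn_comp_two_mul hη
  unfold levelTwoQuotient E₂₂ E₂₄
  exact DifferentiableOn.div (by fun_prop) (hη'.pow 16)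
    fun τ hτ ↦ pow_ne_zero _ (η_ne_zero (im_two_mul_pos hτ))

theorem levelTwoQuotient_eq (τ : ℂ) :
    levelTwoQuotient τ =
      (E₂₂ τ ^ 2 - E₂₄ τ) / qq τ * eulerProduct (qq τ) ^ 8 / eulerProduct (qq τ ^ 2) ^ 16 := by
  have hq := qq_ne_zero τ
  rw [levelTwoQuotient, η_eq_exp_mul, η_two_mul]
  field_simp
  rw [exp_pow_twentyfour]
  ring

theorem levelTwoQuotient_fricke {τ : ℂ} (hτ : 0 < τ.im) :
    levelTwoQuotient (fricke τ) = 64 * (E₂₂ τ ^ 2 + E₂₄ τ) *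
      eulerProduct (qq τ ^ 2) ^ 8 / eulerProduct (qq τ) ^ 16 := by
  have hτ0 : τ ≠ 0 := fun h ↦ by simp [h] at hτ
  rw [levelTwoQuotient, E₂₂_fricke hτ, E₂₄_fricke hτ, η_fricke_pow_eight hτ,
    η_two_mul_fricke_pow_sixteen hτ, η_two_mul, η_eq_exp_mul]
  field_simp
  ring

theorem levelTwoQuotient_add_one (τ : ℂ) : levelTwoQuotient (τ + 1) = levelTwoQuotient τ := by
  simp only [levelTwoQuotient_eq, E₂₂_add_one, E₂₄_add_one, qq_add_one]

theorem levelTwoQuotient_fricke_add_one {τ : ℂ} (hτ : 0 < τ.im) :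
    levelTwoQuotient (fricke (τ + 1)) = levelTwoQuotient (fricke τ) := by
  rw [levelTwoQuotient_fricke hτ, levelTwoQuotient_fricke (by simpa using hτ), E₂₂_add_one,
    E₂₄_add_one, qq_add_one]

theorem tendsto_levelTwoQuotient :
    Tendsto levelTwoQuotient (comap Complex.im atTop) (𝓝 128) := by
  have h := (tendsto_E₂₂_sq_sub_E₂₄_div.mul (tendsto_eulerProduct_qq.pow 8)).div
    (tendsto_eulerProduct_qq_sq.pow 16) (by norm_num)
  simp only [one_pow, mul_one, div_one] at h
  exact h.congr fun τ ↦ (levelTwoQuotient_eq τ).symm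

theorem isBigO_levelTwoQuotient_fricke :
    (fun τ ↦ levelTwoQuotient (fricke τ)) =O[comap Complex.im atTop] (1 : ℂ → ℝ) := by
  have h₂ := tendsto_of_tendsto_sub_div_qq tendsto_E₂₂_sub_one_div
  have h₄ := tendsto_of_tendsto_sub_div_qq tendsto_E₂₄_sub_one_div
  have h := ((((h₂.pow 2).add h₄).const_mul 64).mul (tendsto_eulerProduct_qq_sq.pow 8)).div
    (tendsto_eulerProduct_qq.pow 16) (by norm_num)
  refine (h.isBigO_one ℝ).congr' ?_ .rfl
  filter_upwards [tendsto_comap.eventually (eventually_gt_atTop 0)] with τ hτ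
  exact (levelTwoQuotient_fricke hτ).symm

theorem levelTwoQuotient_eq_const {τ : ℂ} (hτ : 0 < τ.im) : levelTwoQuotient τ = 128 :=
  eq_of_tendsto_of_fricke_periodic differentiableOn_levelTwoQuotient
    (fun τ _ ↦ levelTwoQuotient_add_one τ) (fun _ ↦ levelTwoQuotient_fricke_add_one)
    tendsto_levelTwoQuotient isBigO_levelTwoQuotient_fricke hτ

theorem E₂₂_sq_sub_E₂₄ {τ : ℂ} (hτ : 0 < τ.im) :
    E₂₂ τ ^ 2 - E₂₄ τ = 128 * η (2 * τ) ^ 16 / η τ ^ 8 := by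
  have h := levelTwoQuotient_eq_const hτ
  rw [levelTwoQuotient, div_eq_iff (pow_ne_zero _ (η_ne_zero (im_two_mul_pos hτ)))] at h
  rwa [eq_div_iff (pow_ne_zero _ (η_ne_zero hτ))]

theorem E₂₂_sq_add_E₂₄ {τ : ℂ} (hτ : 0 < τ.im) :
    E₂₂ τ ^ 2 + E₂₄ τ = 2 * η τ ^ 16 / η (2 * τ) ^ 8 := by
  have hτ0 : τ ≠ 0 := fun h ↦ by simp [h] at hτ
  have hη := η_ne_zero (im_two_mul_pos hτ)
  have h := E₂₂_sq_sub_E₂₄ (im_fricke_pos hτ)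
  rw [E₂₂_fricke hτ, E₂₄_fricke hτ, η_two_mul_fricke_pow_sixteen hτ, η_fricke_pow_eight hτ] at h
  field_simp at h ⊢
  linear_combination h / 64

theorem stmt6 (τ : ℂ) (hτ : 0 < τ.im) :
    E₂₂ τ ^ 2 - E₂₄ τ = 128 * η (2 * τ) ^ 16 / η τ ^ 8 ∧
    E₂₂ τ ^ 2 + E₂₄ τ = 2 * η τ ^ 16 / η (2 * τ) ^ 8 :=
  ⟨E₂₂_sq_sub_E₂₄ hτ, E₂₂_sq_add_E₂₄ hτ⟩
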